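/- Let $H=\int_X^{\oplus}H(x)\,d\mu(x)$ be a decomposable self-adjoint operator, where $x\mapsto H(x)$ is a measurable field of uniformly bounded self-adjoint operators on a connected compact metric measure space $X$ with $\mu$ of full support, and suppose $x\mapsto H(x)$ is norm-continuous. Then $\sigma(H)=\overline{\bigcup_{x\in X}\sigma(H(x))}$, and moreover, if $\lambda\in\sigma(H(x_0))$ for some $x_0\in X$ with $\mu(\{x_0\})=0$, then $\lambda\in\sigma_{ess}(H)$. -/

import Mathlib

open MeasureTheory

/-- The essential spectrum of a bounded operator: the part of the spectrum
stable under all compact perturbations (Weyl). -/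
noncomputable def essSpectrum {E : Type*} [NormedAddCommGroup E] [NormedSpace ℂ E]
    (H : E →L[ℂ] E) : Set ℂ :=
  ⋂ K ∈ {K : E →L[ℂ] E | IsCompactOperator K}, spectrum ℂ (H + K)

open Filter Topology in
/-- A normal operator that is bounded below is invertible. -/
theorem isUnit_of_normal_bound {E : Type*} [NormedAddCommGroup E] [InnerProductSpace ℂ E]
    [CompleteSpace E] (A : E →L[ℂ] E) (hA : IsStarNormal A) (C : ℝ)
    (h : ∀ v, ‖v‖ ≤ C * ‖A v‖) : IsUnit A := by
  have hanti : AntilipschitzWith C.toNNReal A := by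
    refine A.antilipschitz_of_bound fun v => (h v).trans ?_
    gcongr
    exact Real.le_coe_toNNReal C
  rw [ContinuousLinearMap.isUnit_iff_bijective,
    ContinuousLinearMap.bijective_iff_dense_range_and_antilipschitz]
  refine ⟨?_, _, hanti⟩
  rw [Submodule.topologicalClosure_eq_top_iff,
    ContinuousLinearMap.IsStarNormal.orthogonal_range hA, Submodule.eq_bot_iff]
  intro v hv
  have hv' : A v = 0 := hv
  have := h v
  rw [hv', norm_zero, mul_zero] at this
  exact norm_le_zero_iff.mp this

theorem isClosed_spectrum_clm {E : Type*} [NormedAddCommGroup E] [NormedSpace ℂ E]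
    [CompleteSpace E] (A : E →L[ℂ] E) : IsClosed (spectrum ℂ A) :=
  spectrum.isClosed A

theorem normal_algebraMap_sub {E : Type*} [NormedAddCommGroup E] [InnerProductSpace ℂ E]
    [CompleteSpace E] (A : E →L[ℂ] E) (hA : IsSelfAdjoint A) (l : ℂ) :
    IsStarNormal (algebraMap ℂ (E →L[ℂ] E) l - A) := by
  constructor
  rw [star_sub, hA.star_eq, ← algebraMap_star_comm]
  refine Commute.sub_left (Algebra.commutes _ _) ?_
  exact Commute.sub_right (Algebra.commutes _ _).symm (Commute.refl _)

/-- A unit is bounded below by the norm of its inverse. -/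
theorem norm_le_inverse {E : Type*} [NormedAddCommGroup E] [NormedSpace ℂ E]
    (A : E →L[ℂ] E) (hA : IsUnit A) (v : E) : ‖v‖ ≤ ‖Ring.inverse A‖ * ‖A v‖ := by
  have h : Ring.inverse A (A v) = v := by
    have := Ring.inverse_mul_cancel A hA
    exact congrArg (fun B : E →L[ℂ] E => B v) this
  calc ‖v‖ = ‖Ring.inverse A (A v)‖ := by rw [h]
    _ ≤ _ := ContinuousLinearMap.le_opNorm _ _

open Filter Topology in
/-- A Weyl singular sequence obstructs invertibility modulo compact operators. -/
theorem weyl_obstruction {E : Type*} [NormedAddCommGroup E] [InnerProductSpace ℂ E]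
    (A K : E →L[ℂ] E) (hK : IsCompactOperator K) (f : ℕ → E) (hf : ∀ n, ‖f n‖ = 1)
    (hAf : Tendsto (fun n => A (f n)) atTop (𝓝 0))
    (hw : ∀ m, Tendsto (fun n => inner ℂ (f n) (f m)) atTop (𝓝 0)) :
    ¬ IsUnit (A - K) := by
  intro hu
  obtain ⟨S, hS, hsub⟩ := IsCompactOperator.image_closedBall_subset_compact
    (f := (K : E →ₗ[ℂ] E)) hK 1
  have hmem : ∀ n, K (f n) ∈ S := fun n => hsub ⟨f n, by simp [hf n], rfl⟩
  obtain ⟨g, -, φ, hφ, hlim⟩ := hS.tendsto_subseq hmem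
  have h1 : Tendsto (fun n => (A - K) (f (φ n))) atTop (𝓝 (0 - g)) := by
    have := (hAf.comp hφ.tendsto_atTop).sub hlim
    simpa [Function.comp_def] using this
  have h2 := ((Ring.inverse (A - K)).continuous.tendsto _).comp h1
  have h3 : Tendsto (fun n => f (φ n)) atTop (𝓝 (Ring.inverse (A - K) (0 - g))) := by
    refine h2.congr fun n => ?_
    exact congrArg (fun B : E →L[ℂ] E => B (f (φ n))) (Ring.inverse_mul_cancel _ hu)
  set y := Ring.inverse (A - K) (0 - g) with hy
  have hny : ‖y‖ = 1 := by
    refine tendsto_nhds_unique h3.norm ?_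
    simp [hf]
  have h4 : ∀ m, inner ℂ y (f m) = 0 := fun m =>
    tendsto_nhds_unique (h3.inner tendsto_const_nhds) ((hw m).comp hφ.tendsto_atTop)
  have h5 : inner ℂ y y = 0 := by
    refine tendsto_nhds_unique ((tendsto_const_nhds (x := y)).inner h3) ?_
    simp [h4]
  rw [inner_self_eq_zero] at h5
  simp [h5] at hny

open Filter Topology in
/-- Approximate eigenvectors supported on small balls. -/
theorem approx_eigen {X : Type*} [MetricSpace X] [MeasurableSpace X] [BorelSpace X]
    (μ : Measure X) [IsFiniteMeasure μ]
    {𝓗 : Type*} [NormedAddCommGroup 𝓗] [InnerProductSpace ℂ 𝓗] [CompleteSpace 𝓗]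
    (T : X → 𝓗 →L[ℂ] 𝓗) (hTcont : Continuous T)
    (hTsa : ∀ x, IsSelfAdjoint (T x))
    (H : Lp 𝓗 2 μ →L[ℂ] Lp 𝓗 2 μ)
    (hHfib : ∀ f : Lp 𝓗 2 μ, (H f : X → 𝓗) =ᵐ[μ] fun x => T x (f x))
    (lam : ℂ) (x₀ : X) (hl : lam ∈ spectrum ℂ (T x₀)) (ε : ℝ) (hε : 0 < ε) :
    ∃ (r : ℝ) (v : 𝓗), 0 < r ∧ r ≤ ε ∧ ‖v‖ = 1 ∧
      ‖(algebraMap ℂ (Lp 𝓗 2 μ →L[ℂ] Lp 𝓗 2 μ) lam - H)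
          (indicatorConstLp 2 (Metric.isOpen_ball (x := x₀) (ε := r)).measurableSet
            (measure_ne_top μ _) v)‖ ≤
        ε * ‖indicatorConstLp 2 (Metric.isOpen_ball (x := x₀) (ε := r)).measurableSet
            (measure_ne_top μ _) v‖ := by
  obtain ⟨v, hv1, hv⟩ : ∃ v : 𝓗, ‖v‖ = 1 ∧ ‖lam • v - T x₀ v‖ ≤ ε / 2 := by
    by_contra! hcon
    apply hl
    refine isUnit_of_normal_bound _ (normal_algebraMap_sub _ (hTsa x₀) lam) (2 / ε) fun v => ?_
    by_cases hv : v = 0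
    · simp [hv]
    have hvp : 0 < ‖v‖ := norm_pos_iff.mpr hv
    have := hcon ((‖v‖⁻¹ : ℂ) • v) (by simp [norm_smul, hvp.ne'])
    have e : lam • ((‖v‖⁻¹ : ℂ) • v) - T x₀ ((‖v‖⁻¹ : ℂ) • v)
        = (‖v‖⁻¹ : ℂ) • ((algebraMap ℂ (𝓗 →L[ℂ] 𝓗) lam - T x₀) v) := by
      simp [smul_sub, smul_comm lam, Algebra.algebraMap_eq_smul_one]
    rw [e, norm_smul] at this
    simp only [norm_inv, Complex.norm_real, norm_norm] at this
    rw [inv_mul_eq_div, lt_div_iff₀ hvp] at this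
    rw [div_mul_eq_mul_div, le_div_iff₀ hε]
    linarith
  obtain ⟨δ, hδ, hball⟩ := Metric.continuous_iff.mp hTcont x₀ (ε / 2) (by positivity)
  refine ⟨min δ ε, v, lt_min hδ hε, min_le_right _ _, hv1, ?_⟩
  apply Lp.norm_le_mul_norm_of_ae_le_mul
  set g := indicatorConstLp 2 (Metric.isOpen_ball (x := x₀) (ε := min δ ε)).measurableSet
            (measure_ne_top μ _) v with hg
  have e : (algebraMap ℂ (Lp 𝓗 2 μ →L[ℂ] Lp 𝓗 2 μ) lam - H) g = lam • g - H g := by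
    simp [Algebra.algebraMap_eq_smul_one]
  rw [e]
  filter_upwards [Lp.coeFn_sub (lam • g) (H g), Lp.coeFn_smul lam g, hHfib g,
    (indicatorConstLp_coeFn : g =ᵐ[μ] _)] with x h1 h2 h3 h4
  rw [h1, Pi.sub_apply, h2, Pi.smul_apply, h3, h4]
  by_cases hx : x ∈ Metric.ball x₀ (min δ ε)
  · rw [Set.indicator_of_mem hx, hv1, mul_one]
    have hd := hball x (lt_of_lt_of_le hx (min_le_left _ _))
    rw [dist_eq_norm] at hd
    have h5 : ‖(T x - T x₀) v‖ ≤ ε / 2 := by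
      refine ((T x - T x₀).le_opNorm v).trans ?_
      rw [hv1, mul_one]; exact hd.le
    have h6 : lam • v - T x v = (lam • v - T x₀ v) - (T x - T x₀) v := by
      simp
    rw [h6]
    refine (norm_sub_le _ _).trans ?_
    linarith
  · simp [Set.indicator_of_notMem hx]

open Filter Topology

set_option maxHeartbeats 2000000 in
/-- for a decomposable self-adjoint operator `H = ∫⊕_X H(x) dμ` with
norm-continuous uniformly bounded self-adjoint fibers over a connected compact
metric measure space with `μ` of full support, `σ(H) = closure ⋃_x σ(H(x))`;
moreover any `λ ∈ σ(H(x₀))` with `μ({x₀}) = 0` lies in `σ_ess(H)`. -/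
theorem directIntegral_spectrum {X : Type*} [MetricSpace X] [CompactSpace X]
    [ConnectedSpace X] [MeasurableSpace X] [BorelSpace X]
    (μ : Measure X) [IsFiniteMeasure μ]
    (hfull : ∀ U : Set X, IsOpen U → U.Nonempty → 0 < μ U)
    {𝓗 : Type*} [NormedAddCommGroup 𝓗] [InnerProductSpace ℂ 𝓗] [CompleteSpace 𝓗]
    (T : X → 𝓗 →L[ℂ] 𝓗) (hTcont : Continuous T)
    (hTsa : ∀ x, IsSelfAdjoint (T x)) (hTbdd : ∃ M, ∀ x, ‖T x‖ ≤ M)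
    (H : Lp 𝓗 2 μ →L[ℂ] Lp 𝓗 2 μ) (hHsa : IsSelfAdjoint H)
    (hHfib : ∀ f : Lp 𝓗 2 μ, (H f : X → 𝓗) =ᵐ[μ] fun x => T x (f x)) :
    spectrum ℂ H = closure (⋃ x : X, spectrum ℂ (T x)) ∧
      ∀ (lam : ℂ) (x₀ : X), lam ∈ spectrum ℂ (T x₀) → μ {x₀} = 0 →
        lam ∈ essSpectrum H := by
  have hBpos : ∀ x r, 0 < r → 0 < μ (Metric.ball x r) := fun x r hr =>
    hfull _ Metric.isOpen_ball ⟨x, Metric.mem_ball_self hr⟩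
  have hgnorm : ∀ (x : X) (r : ℝ) (v : 𝓗), ‖v‖ = 1 →
      ‖indicatorConstLp 2 (Metric.isOpen_ball (x := x) (ε := r)).measurableSet
            (measure_ne_top μ _) v‖ = Real.sqrt (μ.real (Metric.ball x r)) := by
    intro x r v hv
    rw [norm_indicatorConstLp (by simp) (by simp), hv, one_mul, Real.sqrt_eq_rpow]
    simp
  have hspos : ∀ x r, 0 < r → 0 < Real.sqrt (μ.real (Metric.ball x r)) := fun x r hr =>
    Real.sqrt_pos.mpr (ENNReal.toReal_pos (hBpos x r hr).ne' (measure_ne_top _ _))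
  refine ⟨?_, ?_⟩
  · apply Set.Subset.antisymm
    · intro lam hlam
      apply subset_closure
      by_contra hcon
      have hunit : ∀ x, IsUnit (algebraMap ℂ (𝓗 →L[ℂ] 𝓗) lam - T x) := by
        intro x
        by_contra hx
        exact hcon (Set.mem_iUnion.mpr ⟨x, hx⟩)
      have hcont : Continuous fun x =>
          ‖Ring.inverse (algebraMap ℂ (𝓗 →L[ℂ] 𝓗) lam - T x)‖ := by
        refine Continuous.norm ?_
        rw [continuous_iff_continuousAt]
        intro x
        have h1 := NormedRing.inverse_continuousAt (hunit x).unit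
        have h2 : ContinuousAt (fun x => algebraMap ℂ (𝓗 →L[ℂ] 𝓗) lam - T x) x :=
          (continuous_const.sub hTcont).continuousAt
        exact ContinuousAt.comp (g := Ring.inverse) h1 h2
      obtain ⟨C, hC⟩ := (isCompact_range hcont).bddAbove
      apply hlam
      refine isUnit_of_normal_bound _ (normal_algebraMap_sub _ hHsa lam) C fun f => ?_
      apply Lp.norm_le_mul_norm_of_ae_le_mul
      have e : (algebraMap ℂ (Lp 𝓗 2 μ →L[ℂ] Lp 𝓗 2 μ) lam - H) f = lam • f - H f := by
        simp [Algebra.algebraMap_eq_smul_one]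
      rw [e]
      filter_upwards [Lp.coeFn_sub (lam • f) (H f), Lp.coeFn_smul lam f, hHfib f]
        with x h1 h2 h3
      rw [h1, Pi.sub_apply, h2, Pi.smul_apply, h3]
      have h4 := norm_le_inverse _ (hunit x) (f x)
      have h5 : (algebraMap ℂ (𝓗 →L[ℂ] 𝓗) lam - T x) (f x) = lam • f x - T x (f x) := by
        simp [Algebra.algebraMap_eq_smul_one]
      rw [h5] at h4
      refine h4.trans ?_
      gcongr
      exact hC ⟨x, rfl⟩
    · refine closure_minimal ?_ (isClosed_spectrum_clm H)
      intro lam hlam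
      obtain ⟨x₀, hx₀⟩ := Set.mem_iUnion.mp hlam
      intro hu
      set B := ‖Ring.inverse (algebraMap ℂ (Lp 𝓗 2 μ →L[ℂ] Lp 𝓗 2 μ) lam - H)‖ with hB
      have hB0 : 0 ≤ B := norm_nonneg _
      obtain ⟨r, v, hr, -, hv, hle⟩ := approx_eigen μ T hTcont hTsa H hHfib lam x₀ hx₀
        (1 / (B + 1)) (by positivity)
      have h1 := norm_le_inverse _ hu
        (indicatorConstLp 2 (Metric.isOpen_ball (x := x₀) (ε := r)).measurableSet
            (measure_ne_top μ _) v)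
      rw [← hB] at h1
      have h2 := h1.trans (mul_le_mul_of_nonneg_left hle hB0)
      rw [hgnorm x₀ r v hv, ← mul_assoc, mul_one_div] at h2
      have h3 : B / (B + 1) < 1 := by rw [div_lt_one (by positivity)]; linarith
      have h4 := hspos x₀ r hr
      nlinarith
  · intro lam x₀ hx₀ hμ0
    refine Set.mem_iInter₂.mpr fun K hK => ?_
    have hK' : IsCompactOperator K := hK
    have hap := fun n : ℕ => approx_eigen μ T hTcont hTsa H hHfib lam x₀ hx₀
        (1 / ((n : ℝ) + 1)) (by positivity)
    choose r v hr hrle hv hle using hap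
    set g : ℕ → Lp 𝓗 2 μ := fun n =>
      indicatorConstLp 2 (Metric.isOpen_ball (x := x₀) (ε := r n)).measurableSet
            (measure_ne_top μ _) (v n) with hg
    have hgn : ∀ n, ‖g n‖ = Real.sqrt (μ.real (Metric.ball x₀ (r n))) := fun n =>
      hgnorm x₀ (r n) (v n) (hv n)
    have hgpos : ∀ n, 0 < ‖g n‖ := fun n => by rw [hgn]; exact hspos x₀ (r n) (hr n)
    have hrlim : Tendsto r atTop (𝓝 0) :=
      squeeze_zero (fun n => (hr n).le) hrle tendsto_one_div_add_atTop_nhds_zero_nat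
    have hμlim : Tendsto (fun n => μ (Metric.closedBall x₀ (r n))) atTop (𝓝 0) := by
      have h1 : Tendsto (fun s => μ (Metric.cthickening s {x₀})) (𝓝 0) (𝓝 (μ {x₀})) :=
        tendsto_measure_cthickening_of_isClosed ⟨1, one_pos, measure_ne_top _ _⟩
          isClosed_singleton
      rw [hμ0] at h1
      refine (h1.comp hrlim).congr fun n => ?_
      simp [Metric.cthickening_singleton x₀ (hr n).le]
    have hglim : Tendsto (fun n => ‖g n‖) atTop (𝓝 0) := by
      have h1 : Tendsto (fun n => μ.real (Metric.ball x₀ (r n))) atTop (𝓝 0) := by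
        have h2 : Tendsto (fun n => μ (Metric.ball x₀ (r n))) atTop (𝓝 0) :=
          tendsto_of_tendsto_of_tendsto_of_le_of_le tendsto_const_nhds hμlim
            (fun n => zero_le) (fun n => measure_mono Metric.ball_subset_closedBall)
        exact (ENNReal.tendsto_toReal ENNReal.zero_ne_top).comp h2
      simp_rw [hgn]
      simpa using h1.sqrt
    have hinner : ∀ n m, ‖inner ℂ (g n) (g m)‖ ≤ ‖g n‖ ^ 2 := by
      intro n m
      rw [hgn n, Real.sq_sqrt measureReal_nonneg]
      rw [hg]
      simp only
      rw [L2.inner_indicatorConstLp_indicatorConstLp, norm_smul, Real.norm_of_nonneg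
        measureReal_nonneg]
      have h1 : ‖inner ℂ (v n) (v m)‖ ≤ 1 := by
        simpa [hv] using norm_inner_le_norm (𝕜 := ℂ) (v n) (v m)
      have h2 : μ.real (Metric.ball x₀ (r n) ∩ Metric.ball x₀ (r m))
          ≤ μ.real (Metric.ball x₀ (r n)) := measureReal_mono Set.inter_subset_left
      calc _ ≤ μ.real (Metric.ball x₀ (r n)) * 1 := by gcongr
        _ = _ := mul_one _
    have key := weyl_obstruction (algebraMap ℂ (Lp 𝓗 2 μ →L[ℂ] Lp 𝓗 2 μ) lam - H) K hK'
      (fun n => ((‖g n‖⁻¹ : ℝ) : ℂ) • g n) ?_ ?_ ?_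
    · intro hu
      apply key
      rwa [sub_sub]
    · intro n
      rw [norm_smul]
      simp [(hgpos n).ne']
    · refine squeeze_zero_norm (fun n => ?_) tendsto_one_div_add_atTop_nhds_zero_nat
      rw [map_smul, norm_smul, Complex.norm_real, norm_inv, norm_norm, inv_mul_eq_div,
        div_le_iff₀ (hgpos n)]
      exact hle n
    · intro m
      have h0 : Tendsto (fun n => ‖g n‖ * ‖g m‖⁻¹) atTop (𝓝 0) := by
        simpa using hglim.mul_const (‖g m‖⁻¹)
      refine squeeze_zero_norm (fun n => ?_) h0
      rw [inner_smul_left, inner_smul_right, norm_mul, norm_mul, RCLike.norm_conj,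
        Complex.norm_real, Complex.norm_real, norm_inv, norm_inv, norm_norm, norm_norm]
      have h1 := hinner n m
      have h2 := hgpos n
      have h3 := hgpos m
      calc _ ≤ ‖g n‖⁻¹ * (‖g m‖⁻¹ * ‖g n‖ ^ 2) := by gcongr
        _ = _ := by field_simp
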